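/- arXiv:2104.12256 — 6 statements merged into one kernel-verified Lean document; each statement's English description precedes it below -/
import Mathlib

section
/- Let x₁,…,xₙ be distinct points of X and let g : X → ℝ be a continuous function with ∫ g² dμ ≠ 0. Then for any real numbers v₁,…,vₙ and any real number w there exists a continuous function u : X → ℝ such that u(xᵢ) = vᵢ for every i ∈ {1,…,n} and ∫ u·g dμ = w. -/
open MeasureTheory

theorem stmt_0 {X : Type*} [MetricSpace X] [CompactSpace X] [Nonempty X]
    [MeasurableSpace X] [BorelSpace X]
    (μ : Measure X) [IsFiniteMeasure μ] (hμ : ∀ x : X, μ {x} = 0)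
    {n : ℕ} (x : Fin n → X) (hx : Function.Injective x)
    (g : C(X, ℝ)) (hg : ∫ t, (g t) ^ 2 ∂μ ≠ 0)
    (v : Fin n → ℝ) (w : ℝ) :
    ∃ u : C(X, ℝ), (∀ i : Fin n, u (x i) = v i) ∧ ∫ t, u t * g t ∂μ = w := by
  have hint : ∀ f : X → ℝ, Continuous f → Integrable f μ := fun f hf =>
    hf.integrable_of_hasCompactSupport (HasCompactSupport.of_compactSpace f)
  let h : X → ℝ := fun t => ∏ i, dist t (x i)
  have hh : Continuous h := by fun_prop
  let p : X → ℝ := fun t =>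
    ∑ i, v i * ∏ j ∈ Finset.univ.erase i, (dist t (x j) / dist (x i) (x j))
  have hp : Continuous p := by
    refine continuous_finsetSum _ fun i _ => continuous_const.mul ?_
    exact continuous_finsetProd _ fun j _ =>
      (continuous_id.dist continuous_const).div_const _
  have hgc : Continuous g := g.continuous
  have hhx : ∀ i, h (x i) = 0 := fun i =>
    Finset.prod_eq_zero (Finset.mem_univ i) (dist_self _)
  have hpx : ∀ i, p (x i) = v i := by
    intro i
    change ∑ k, v k * ∏ j ∈ Finset.univ.erase k, (dist (x i) (x j) / dist (x k) (x j)) = v i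
    rw [Finset.sum_eq_single i]
    · rw [Finset.prod_eq_one, mul_one]
      intro j hj
      apply div_self
      rw [dist_ne_zero]
      exact fun e => (Finset.ne_of_mem_erase hj) (hx e).symm
    · intro k _ hk
      rw [Finset.prod_eq_zero (i := i), mul_zero]
      · simp [hk.symm]
      · simp
    · simp
  have hI : ∫ t, h t * g t ^ 2 ∂μ ≠ 0 := by
    intro h0
    rw [integral_eq_zero_iff_of_nonneg
      (fun t => mul_nonneg (Finset.prod_nonneg fun i _ => dist_nonneg) (sq_nonneg _))
      (hint _ (hh.mul (hgc.pow 2)))] at h0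
    apply hg
    apply integral_eq_zero_of_ae
    have hx' : ∀ᵐ t ∂μ, ∀ i, t ≠ x i := by
      rw [ae_all_iff]
      intro i
      rw [ae_iff]
      simpa using hμ (x i)
    filter_upwards [h0, hx'] with t ht1 ht2
    rcases mul_eq_zero.mp ht1 with h1 | h1
    · exact absurd h1 (Finset.prod_ne_zero_iff.mpr fun i _ => dist_ne_zero.mpr (ht2 i))
    · exact h1
  let c : ℝ := (w - ∫ t, p t * g t ∂μ) / ∫ t, h t * g t ^ 2 ∂μ
  refine ⟨⟨fun t => p t + c * (h t * g t), by fun_prop⟩, fun i => ?_, ?_⟩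
  · simp [hhx, hpx]
  · have : ∀ t, (p t + c * (h t * g t)) * g t = p t * g t + c * (h t * g t ^ 2) := by
      intro t; ring
    simp only [ContinuousMap.coe_mk, this]
    rw [integral_add (hint _ (by fun_prop)) (hint _ (by fun_prop)), integral_const_mul,
      div_mul_cancel₀ _ hI]
    ring
end

section
/- Let x₁,…,xₙ be distinct points of X, let g : X → ℝ be continuous, let r > 0, let u' : X → ℝ be continuous with sup_{x∈X} |u'(x)| ≤ r, and let v₁,…,vₙ be real numbers with |vᵢ| ≤ r for each i. Then for every ε > 0 there exists a continuous function u : X → ℝ with sup_{x∈X} |u(x)| ≤ r, u(xᵢ) = vᵢ for every i ∈ {1,…,n}, and |∫ (u' − u)·g dμ| < ε. -/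
open MeasureTheory

theorem stmt_1 {X : Type*} [MetricSpace X] [CompactSpace X] [Nonempty X]
    [MeasurableSpace X] [BorelSpace X]
    (μ : Measure X) [IsFiniteMeasure μ] (hμ : ∀ x : X, μ {x} = 0)
    {n : ℕ} (x : Fin n → X) (hx : Function.Injective x)
    (g : C(X, ℝ)) (r : ℝ) (hr : 0 < r)
    (u' : C(X, ℝ)) (hu' : ∀ t : X, |u' t| ≤ r)
    (v : Fin n → ℝ) (hv : ∀ i : Fin n, |v i| ≤ r)
    (ε : ℝ) (hε : 0 < ε) :
    ∃ u : C(X, ℝ), (∀ t : X, |u t| ≤ r) ∧ (∀ i : Fin n, u (x i) = v i) ∧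
      |∫ t, (u' t - u t) * g t ∂μ| < ε := by
  classical
  -- a continuous interpolant with values in [-r, r]
  obtain ⟨w, hwr, hwv⟩ : ∃ w : C(X, ℝ), (∀ t, |w t| ≤ r) ∧ ∀ i, w (x i) = v i := by
    let w0 : X → ℝ := fun t => ∑ i, v i * ∏ j ∈ Finset.univ.erase i,
      (dist t (x j) / dist (x i) (x j))
    have hw0 : Continuous w0 := by fun_prop
    have hval : ∀ i, w0 (x i) = v i := by
      intro i
      have h1 : w0 (x i) = v i * ∏ j ∈ Finset.univ.erase i,
          (dist (x i) (x j) / dist (x i) (x j)) := by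
        apply Finset.sum_eq_single i
        · intro b _ hb
          rw [Finset.prod_eq_zero (i := i), mul_zero]
          · simp [hb.symm]
          · simp
        · simp
      rw [h1, Finset.prod_eq_one, mul_one]
      intro j hj
      apply div_self
      rw [dist_ne_zero]
      exact fun h => (Finset.ne_of_mem_erase hj) (hx h).symm
    refine ⟨⟨fun t => max (-r) (min r (w0 t)), by fun_prop⟩, ?_, ?_⟩
    · intro t
      rw [abs_le]
      exact ⟨le_max_left _ _, max_le (by linarith) (min_le_left _ _)⟩
    · intro i
      have := abs_le.1 (hv i)
      simp [hval, min_eq_right this.2, max_eq_right this.1]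
  -- a continuous function vanishing exactly at the points
  let d : X → ℝ := fun t => ∏ i, dist t (x i)
  have hd : Continuous d := by fun_prop
  have hd0 : ∀ t, 0 ≤ d t := fun t => Finset.prod_nonneg fun _ _ => dist_nonneg
  have hdx : ∀ i, d (x i) = 0 := fun i => Finset.prod_eq_zero (Finset.mem_univ i) (dist_self _)
  let φ : X → ℝ := fun t => (1 + d t)⁻¹
  have hφ : Continuous φ := by
    apply Continuous.inv₀ (by fun_prop)
    intro t; linarith [hd0 t]
  have hφ0 : ∀ t, 0 ≤ φ t := fun t => inv_nonneg.2 (by linarith [hd0 t])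
  have hφ1 : ∀ t, φ t ≤ 1 := fun t => inv_le_one_of_one_le₀ (by linarith [hd0 t])
  have hlim : Filter.Tendsto (fun k : ℕ => ∫ t, φ t ^ k * ((u' t - w t) * g t) ∂μ)
      Filter.atTop (nhds (∫ _, (0 : ℝ) ∂μ)) := by
    apply tendsto_integral_of_dominated_convergence (fun _ => ‖(u' - w) * g‖)
    · intro k
      exact (by fun_prop : Continuous _).aestronglyMeasurable
    · exact integrable_const _
    · intro k
      refine Filter.Eventually.of_forall fun t => ?_
      rw [norm_mul]
      have h1 : ‖φ t ^ k‖ ≤ 1 := by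
        rw [Real.norm_of_nonneg (pow_nonneg (hφ0 t) k)]
        exact pow_le_one₀ (hφ0 t) (hφ1 t)
      have h2 := ((u' - w) * g).norm_coe_le_norm t
      have h3 : ‖(u' t - w t) * g t‖ ≤ ‖(u' - w) * g‖ := h2
      nlinarith [norm_nonneg ((u' t - w t) * g t)]
    · have hnull : ∀ᵐ t ∂μ, ∀ i, t ≠ x i := by
        rw [ae_all_iff]
        intro i
        rw [ae_iff]
        simpa using hμ (x i)
      filter_upwards [hnull] with t ht
      have hpos : 0 < d t := Finset.prod_pos fun i _ => dist_pos.2 (ht i)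
      have := (tendsto_pow_atTop_nhds_zero_of_lt_one (hφ0 t)
        (inv_lt_one_of_one_lt₀ (by linarith))).mul_const ((u' t - w t) * g t)
      simpa using this
  rw [integral_zero] at hlim
  obtain ⟨k, hk⟩ := ((Metric.tendsto_nhds.1 hlim) ε hε).exists
  rw [Real.dist_eq, sub_zero] at hk
  refine ⟨⟨fun t => u' t - φ t ^ k * (u' t - w t), by fun_prop⟩, ?_, ?_, ?_⟩
  · intro t
    have a0 := pow_nonneg (hφ0 t) k
    have a1 : φ t ^ k ≤ 1 := pow_le_one₀ (hφ0 t) (hφ1 t)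
    have b := abs_le.1 (hu' t)
    have c := abs_le.1 (hwr t)
    simp only [ContinuousMap.coe_mk]
    rw [abs_le]
    constructor <;> nlinarith
  · intro i
    simp [φ, hdx, hwv]
  · convert hk using 3
    ext t
    simp only [ContinuousMap.coe_mk]
    ring
end

section
/- Let E be a real normed vector space, F a finite-dimensional real normed vector space, and A : E → F a surjective continuous linear map. Suppose d > 0 satisfies ‖v' ∘ A‖ ≥ d for every continuous linear functional v' : F → ℝ with ‖v'‖ = 1. Then for every continuous linear map δA : E → F with operator norm ‖δA‖ < d, the map A + δA is surjective. In particular, the set of surjective continuous linear maps from E to F is open in the operator-norm topology. -/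
theorem surj_aux {E F : Type*} [NormedAddCommGroup E] [NormedSpace ℝ E]
    [NormedAddCommGroup F] [NormedSpace ℝ F] [FiniteDimensional ℝ F]
    (A : E →L[ℝ] F) (d : ℝ)
    (hbound : ∀ v' : F →L[ℝ] ℝ, ‖v'‖ = 1 → d ≤ ‖v'.comp A‖)
    (δA : E →L[ℝ] F) (hδ : ‖δA‖ < d) : Function.Surjective (A + δA) := by
  by_contra hns
  have hlt : LinearMap.range (A + δA).toLinearMap < ⊤ := by
    rw [lt_top_iff_ne_top]
    intro h
    exact hns (LinearMap.range_eq_top.mp h)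
  obtain ⟨f, hf0, hf⟩ := Submodule.exists_le_ker_of_lt_top _ hlt
  let g : F →L[ℝ] ℝ := LinearMap.toContinuousLinearMap f
  have hg0 : g ≠ 0 := by
    intro h
    apply hf0
    ext x
    exact congrArg (fun k : F →L[ℝ] ℝ => k x) h
  have hg : ∀ x, g (A x) + g (δA x) = 0 := by
    intro x
    have h1 : f ((A + δA) x) = 0 := hf ⟨x, rfl⟩
    rw [← map_add]
    exact h1
  have hn : ‖g‖ ≠ 0 := norm_ne_zero_iff.mpr hg0
  let v : F →L[ℝ] ℝ := ‖g‖⁻¹ • g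
  have hv : ‖v‖ = 1 := by
    simp only [v, norm_smul, norm_inv, norm_norm]
    exact inv_mul_cancel₀ hn
  have he : v.comp A = -(v.comp δA) := by
    ext x
    have := hg x
    have h2 : g (A x) = - g (δA x) := by linarith
    simp [v, h2]
  have h3 := hbound v hv
  rw [he, norm_neg] at h3
  have h4 := v.opNorm_comp_le δA
  rw [hv, one_mul] at h4
  linarith

theorem stmt_3 {E F : Type*} [NormedAddCommGroup E] [NormedSpace ℝ E]
    [NormedAddCommGroup F] [NormedSpace ℝ F] [FiniteDimensional ℝ F]
    (A : E →L[ℝ] F) (hA : Function.Surjective A)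
    (d : ℝ) (hd : 0 < d)
    (hbound : ∀ v' : F →L[ℝ] ℝ, ‖v'‖ = 1 → d ≤ ‖v'.comp A‖) :
    (∀ δA : E →L[ℝ] F, ‖δA‖ < d → Function.Surjective (A + δA)) ∧
    IsOpen {B : E →L[ℝ] F | Function.Surjective B} := by
  refine ⟨surj_aux A d hbound, ?_⟩
  rw [Metric.isOpen_iff]
  intro B hB
  obtain ⟨S₀, hS₀⟩ := B.toLinearMap.exists_rightInverse_of_surjective
    (LinearMap.range_eq_top.mpr hB)
  let S : F →L[ℝ] E := LinearMap.toContinuousLinearMap S₀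
  have hS : ∀ y, B (S y) = y := fun y => LinearMap.congr_fun hS₀ y
  have hpos : 0 < ‖S‖ + 1 := by positivity
  refine ⟨(‖S‖ + 1)⁻¹, inv_pos.mpr hpos, ?_⟩
  intro C hC
  rw [Metric.mem_ball, dist_eq_norm] at hC
  have key := surj_aux B (‖S‖ + 1)⁻¹ ?_ (C - B) hC
  · have h : B + (C - B) = C := by abel
    rw [h] at key
    exact key
  · intro v hv
    have h1 : (v.comp B).comp S = v := by
      ext y
      simp [hS]
    have h2 := (v.comp B).opNorm_comp_le S
    rw [h1, hv] at h2
    rw [inv_le_iff_one_le_mul₀ hpos]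
    nlinarith [norm_nonneg (v.comp B)]
end

section
/- Let E be a real normed vector space, F and G finite-dimensional real normed vector spaces, A : E → F a surjective continuous linear map, and B : E → G a continuous linear map. Then there exists a continuous map f : F → G such that f(A u) = B u for all u ∈ E if and only if for every continuous linear functional w' : G → ℝ there exists a continuous linear functional v' : F → ℝ with w' ∘ B = v' ∘ A (that is, if and only if the image of the dual map of B is contained in the image of the dual map of A). -/
theorem stmt_6 {E F G : Type*} [NormedAddCommGroup E] [NormedSpace ℝ E]
    [NormedAddCommGroup F] [NormedSpace ℝ F] [FiniteDimensional ℝ F]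
    [NormedAddCommGroup G] [NormedSpace ℝ G] [FiniteDimensional ℝ G]
    (A : E →L[ℝ] F) (hA : Function.Surjective A) (B : E →L[ℝ] G) :
    (∃ f : F → G, Continuous f ∧ ∀ u : E, f (A u) = B u) ↔
      ∀ w' : G →L[ℝ] ℝ, ∃ v' : F →L[ℝ] ℝ, w'.comp B = v'.comp A := by
  obtain ⟨S, hS⟩ := (A : E →ₗ[ℝ] F).exists_rightInverse_of_surjective
    (LinearMap.range_eq_top.2 hA)
  have hS' : ∀ x, A (S x) = x := fun x => LinearMap.congr_fun hS x
  let T : F →L[ℝ] G := LinearMap.toContinuousLinearMap ((B : E →ₗ[ℝ] G) ∘ₗ S)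
  have hT : ∀ x, T x = B (S x) := fun x => rfl
  constructor
  · rintro ⟨f, -, hf⟩ w'
    refine ⟨w'.comp T, ?_⟩
    ext u
    simp only [ContinuousLinearMap.comp_apply, hT]
    rw [← hf (S (A u)), hS', hf]
  · intro h
    refine ⟨T, T.continuous, fun u => ?_⟩
    rw [hT]
    refine (SeparatingDual.eq_iff_forall_dual_eq (R := ℝ)).2 fun w' => ?_
    obtain ⟨v', hv⟩ := h w'
    have h1 := fun x => DFunLike.congr_fun hv x
    simp only [ContinuousLinearMap.comp_apply] at h1
    rw [h1, h1, hS']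
end

section
/- Let E be an infinite-dimensional real normed vector space, F and G finite-dimensional real normed vector spaces, and A : E → F, B : E → G surjective continuous linear maps satisfying the transversality condition: for all continuous linear functionals v' : F → ℝ and w' : G → ℝ, if v' ∘ A = w' ∘ B then v' ∘ A = 0. Then for every v ∈ F and every w ∈ G the set {u ∈ E : A u = v and B u = w} is infinite; in particular the joint map u ↦ (A u, B u) from E to F × G is surjective with nontrivial kernel. -/
theorem stmt_8 {E F G : Type*} [NormedAddCommGroup E] [NormedSpace ℝ E]
    [NormedAddCommGroup F] [NormedSpace ℝ F] [FiniteDimensional ℝ F]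
    [NormedAddCommGroup G] [NormedSpace ℝ G] [FiniteDimensional ℝ G]
    (hE : ¬ FiniteDimensional ℝ E)
    (A : E →L[ℝ] F) (hA : Function.Surjective A)
    (B : E →L[ℝ] G) (hB : Function.Surjective B)
    (htrans : ∀ (v' : F →L[ℝ] ℝ) (w' : G →L[ℝ] ℝ),
      v'.comp A = w'.comp B → v'.comp A = 0) :
    (∀ (v : F) (w : G), {u : E | A u = v ∧ B u = w}.Infinite) ∧
    Function.Surjective (fun u : E => (A u, B u)) ∧
    (∃ u : E, u ≠ 0 ∧ A u = 0 ∧ B u = 0) := by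
  let L : E →ₗ[ℝ] F × G := (A : E →ₗ[ℝ] F).prod (B : E →ₗ[ℝ] G)
  have hL : ∀ u, L u = (A u, B u) := fun u => rfl
  have hrange : LinearMap.range L = ⊤ := by
    by_contra hne
    obtain ⟨f, hf0, hf⟩ := Submodule.exists_le_ker_of_lt_top _ (lt_top_iff_ne_top.mpr hne)
    have hfL : ∀ u, f (A u, B u) = 0 := fun u => hf ⟨u, hL u⟩
    have hsplit : ∀ (x : F) (y : G), f (x, y) = f (x, 0) + f (0, y) := by
      intro x y
      rw [← map_add]
      simp
    let v' : F →L[ℝ] ℝ := LinearMap.toContinuousLinearMap (f.comp (LinearMap.inl ℝ F G))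
    let w' : G →L[ℝ] ℝ := -LinearMap.toContinuousLinearMap (f.comp (LinearMap.inr ℝ F G))
    have hv : ∀ x, v' x = f (x, 0) := fun x => rfl
    have hw : ∀ y, w' y = -f (0, y) := fun y => rfl
    have h0 := htrans v' w' (by
      ext u
      have h1 := hfL u
      rw [hsplit] at h1
      simp only [ContinuousLinearMap.comp_apply, hv, hw]
      linarith)
    have hA0 : ∀ u, f (A u, 0) = 0 := fun u => by
      have := DFunLike.congr_fun h0 u
      simpa only [ContinuousLinearMap.comp_apply, hv, ContinuousLinearMap.zero_apply] using this
    apply hf0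
    refine LinearMap.ext ?_
    rintro ⟨x, y⟩
    obtain ⟨a, rfl⟩ := hA x
    obtain ⟨b, rfl⟩ := hB y
    have h1 := hfL b
    rw [hsplit, hA0] at h1
    rw [hsplit, hA0, h1]
    rfl
  have hsurj : Function.Surjective (fun u : E => (A u, B u)) :=
    LinearMap.range_eq_top.mp hrange
  have hker : ∃ u : E, u ≠ 0 ∧ A u = 0 ∧ B u = 0 := by
    by_contra hcon
    apply hE
    refine FiniteDimensional.of_injective L ((injective_iff_map_eq_zero L).mpr ?_)
    intro u hu
    by_contra hne
    rw [hL, Prod.mk_eq_zero] at hu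
    exact hcon ⟨u, hne, hu⟩
  refine ⟨?_, hsurj, hker⟩
  intro v w
  obtain ⟨k, hk, hkA, hkB⟩ := hker
  obtain ⟨u, hu⟩ := hsurj (v, w)
  obtain ⟨huA, huB⟩ := Prod.mk.inj hu
  refine Set.infinite_of_injective_forall_mem (f := fun t : ℝ => u + t • k) ?_ ?_
  · intro s t hst
    exact smul_left_injective ℝ hk (add_left_cancel hst)
  · intro t
    simp [hkA, hkB, huA, huB]
end

section
/- Let A : E → F be a surjective continuous linear map, B : E → G a continuous linear map, and S : F → F the inverse of the bijective map A ∘ A*. For a continuous linear map C : F → G define J(C) = tr[(B − C∘A) ∘ (B − C∘A)*], the trace of the endomorphism (B − C∘A)(B − C∘A)* of the finite-dimensional space G. Then C₀ = B ∘ A* ∘ S satisfies J(C₀) ≤ J(C) for every continuous linear map C : F → G, with equality if and only if C = C₀; that is, C = B A*(A A*)⁻¹ is the unique minimiser of J. -/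
open ContinuousLinearMap

theorem trace_comp_adjoint_aux {E G ι : Type*} [Fintype ι]
    [NormedAddCommGroup E] [InnerProductSpace ℝ E] [CompleteSpace E]
    [NormedAddCommGroup G] [InnerProductSpace ℝ G] [CompleteSpace G]
    (b : OrthonormalBasis ι ℝ G) (T : E →L[ℝ] G) :
    LinearMap.trace ℝ G ((T.comp (adjoint T) : G →L[ℝ] G) : G →ₗ[ℝ] G)
      = ∑ i, ‖adjoint T (b i)‖ ^ 2 := by
  rw [LinearMap.trace_eq_sum_inner _ b]
  refine Finset.sum_congr rfl fun i _ => ?_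
  rw [← real_inner_self_eq_norm_sq, adjoint_inner_left]
  rfl

theorem stmt_17 {E F G : Type*}
    [NormedAddCommGroup E] [InnerProductSpace ℝ E] [CompleteSpace E]
    [NormedAddCommGroup F] [InnerProductSpace ℝ F] [FiniteDimensional ℝ F]
    [NormedAddCommGroup G] [InnerProductSpace ℝ G] [FiniteDimensional ℝ G]
    (A : E →L[ℝ] F) (hA : Function.Surjective A) (B : E →L[ℝ] G)
    (S : F →L[ℝ] F)
    (hS₁ : ∀ v : F, A (adjoint A (S v)) = v)
    (hS₂ : ∀ v : F, S (A (adjoint A v)) = v) :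
    ∀ C : F →L[ℝ] G,
      LinearMap.trace ℝ G
          (((B - ((B.comp (adjoint A)).comp S).comp A).comp
            (adjoint (B - ((B.comp (adjoint A)).comp S).comp A)) : G →L[ℝ] G) : G →ₗ[ℝ] G)
        ≤ LinearMap.trace ℝ G
            (((B - C.comp A).comp (adjoint (B - C.comp A)) : G →L[ℝ] G) : G →ₗ[ℝ] G) ∧
      (LinearMap.trace ℝ G
          (((B - ((B.comp (adjoint A)).comp S).comp A).comp
            (adjoint (B - ((B.comp (adjoint A)).comp S).comp A)) : G →L[ℝ] G) : G →ₗ[ℝ] G)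
        = LinearMap.trace ℝ G
            (((B - C.comp A).comp (adjoint (B - C.comp A)) : G →L[ℝ] G) : G →ₗ[ℝ] G)
        ↔ C = (B.comp (adjoint A)).comp S) := by
  intro C
  have b := stdOrthonormalBasis ℝ G
  obtain ⟨C₀, hC₀⟩ : ∃ C₀, C₀ = (B.comp (adjoint A)).comp S := ⟨_, rfl⟩
  have h0 : ∀ v : F, (B - C₀.comp A) (adjoint A v) = 0 := by
    intro v
    simp [hC₀, hS₂]
  rw [← hC₀, trace_comp_adjoint_aux b, trace_comp_adjoint_aux b]
  have hadj : ∀ g : G, adjoint (B - C.comp A) g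
      = adjoint (B - C₀.comp A) g + adjoint A (adjoint (C₀ - C) g) := by
    intro g
    simp only [map_sub, adjoint_comp, sub_apply, comp_apply]
    abel
  have key : ∀ g : G, ‖adjoint (B - C.comp A) g‖ ^ 2
      = ‖adjoint (B - C₀.comp A) g‖ ^ 2 + ‖adjoint A (adjoint (C₀ - C) g)‖ ^ 2 := by
    intro g
    rw [hadj, norm_add_sq_real, adjoint_inner_left, h0, inner_zero_right]
    ring
  have hsum : ∑ i, ‖adjoint (B - C.comp A) (b i)‖ ^ 2
      = ∑ i, ‖adjoint (B - C₀.comp A) (b i)‖ ^ 2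
        + ∑ i, ‖adjoint A (adjoint (C₀ - C) (b i))‖ ^ 2 := by
    rw [← Finset.sum_add_distrib]
    exact Finset.sum_congr rfl fun i _ => key (b i)
  have hnn : 0 ≤ ∑ i, ‖adjoint A (adjoint (C₀ - C) (b i))‖ ^ 2 :=
    Finset.sum_nonneg fun i _ => sq_nonneg _
  refine ⟨by linarith, fun h => ?_, fun h => by rw [h]⟩
  have hz : ∑ i, ‖adjoint A (adjoint (C₀ - C) (b i))‖ ^ 2 = 0 := by linarith
  rw [Finset.sum_eq_zero_iff_of_nonneg fun i _ => sq_nonneg _] at hz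
  have hD : ∀ i, adjoint (C₀ - C) (b i) = 0 := by
    intro i
    have h1 : adjoint A (adjoint (C₀ - C) (b i)) = 0 := by
      simpa using hz i (Finset.mem_univ i)
    rw [← hS₂ (adjoint (C₀ - C) (b i)), h1, map_zero, map_zero]
  have hv : ∀ v, (C₀ - C) v = 0 := by
    intro v
    refine InnerProductSpace.ext_inner_left_basis b.toBasis fun i => ?_
    rw [b.coe_toBasis, ← adjoint_inner_left, hD, inner_zero_left, inner_zero_right]
  ext v
  exact (sub_eq_zero.mp (hv v)).symm
end
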